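/- arXiv:2410.07478 — 2 statements merged into one kernel-verified Lean document; each statement's English description precedes it below -/
import Mathlib

section
/- If f : U → ℂ is holomorphic on an open set U ⊆ ℂ^ℓ and vanishes on the set where any two coordinates coincide, then there exists a unique holomorphic g : U → ℂ with f = g · Δ, where Δ is the Vandermonde determinant. -/
/-- The Vandermonde polynomial `Δ_n(μ) = ∏_{i<j} (μ j - μ i)` as a function. -/
noncomputable def vdet {n : ℕ} (z : Fin n → ℂ) : ℂ :=
  ∏ p ∈ Finset.univ.filter (fun p : Fin n × Fin n => p.1 < p.2), (z p.2 - z p.1)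

open Filter Topology Metric Set MeasureTheory in
/-- Holomorphic dependence of an integral on a parameter. -/
lemma differentiableAt_integral_param {n : ℕ} (a : Fin n → ℂ) {R : ℝ} (hR : 0 < R)
    (K : (Fin n → ℂ) → ℝ → ℂ)
    (hc : ContinuousOn (fun p : (Fin n → ℂ) × ℝ => K p.1 p.2) (ball a R ×ˢ univ))
    (hd : ∀ θ, DifferentiableOn ℂ (fun x => K x θ) (ball a R)) (α β : ℝ) :
    DifferentiableAt ℂ (fun x => ∫ θ in α..β, K x θ) a := by
  have hcθ : ∀ x ∈ ball a R, Continuous (K x) := by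
    intro x hx
    have h1 : Continuous fun θ : ℝ => ((x, θ) : (Fin n → ℂ) × ℝ) := by fun_prop
    exact hc.comp_continuous h1 (fun θ => ⟨hx, mem_univ _⟩)
  have haR : a ∈ ball a R := mem_ball_self hR
  obtain ⟨M, hM⟩ : ∃ M, ∀ p ∈ closedBall a (R/2) ×ˢ uIcc α β, ‖K p.1 p.2‖ ≤ M := by
    refine ((isCompact_closedBall a (R/2)).prod isCompact_uIcc).exists_bound_of_continuousOn ?_
    refine hc.mono (prod_mono (closedBall_subset_ball (by linarith)) (subset_univ _))
  have hda : ∀ θ, ∀ x ∈ ball a R, HasFDerivAt (fun x => K x θ) (fderiv ℂ (fun x => K x θ) x) x :=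
    fun θ x hx => ((hd θ).differentiableAt (isOpen_ball.mem_nhds hx)).hasFDerivAt
  have happ : ∀ w : Fin n → ℂ, StronglyMeasurable fun θ => fderiv ℂ (fun x => K x θ) a w := by
    intro w
    have ht : Tendsto (fun k : ℕ => a + ((k : ℂ))⁻¹ • w) atTop (𝓝 a) := by
      have : Tendsto (fun k : ℕ => a + ((k : ℂ))⁻¹ • w) atTop (𝓝 (a + (0:ℂ) • w)) := by
        refine tendsto_const_nhds.add (Tendsto.smul ?_ tendsto_const_nhds)
        exact tendsto_inv_atTop_nhds_zero_nat
      simpa using this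
    obtain ⟨N, hN⟩ := eventually_atTop.1 (ht.eventually (isOpen_ball.mem_nhds haR))
    refine stronglyMeasurable_of_tendsto (u := atTop)
      (f := fun (k : ℕ) θ => ((k + N + 1 : ℕ) : ℂ) • (K (a + (((k + N + 1 : ℕ) : ℂ))⁻¹ • w) θ - K a θ))
      (fun k => ?_) ?_
    · refine Continuous.stronglyMeasurable ?_
      have h1 := hcθ _ (hN (k + N + 1) (by omega))
      have h2 := hcθ a haR
      fun_prop
    · rw [tendsto_pi_nhds]
      intro θ
      refine (hda θ a haR).lim w (c := fun k : ℕ => ((k + N + 1 : ℕ) : ℂ)) ?_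
      simp only [Complex.norm_natCast]
      exact tendsto_natCast_atTop_atTop.comp
        (tendsto_atTop_mono (fun k => by simp only [id]; omega) tendsto_id)
  have hmeas : StronglyMeasurable fun θ => fderiv ℂ (fun x => K x θ) a := by
    have : (fun θ => fderiv ℂ (fun x => K x θ) a) = fun θ =>
        ∑ i : Fin n, (fderiv ℂ (fun x => K x θ) a (Pi.single i 1)) •
          (ContinuousLinearMap.proj i : (Fin n → ℂ) →L[ℂ] ℂ) := by
      funext θ
      refine ContinuousLinearMap.ext fun x => ?_
      conv_lhs => rw [pi_eq_sum_univ' x]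
      simp only [map_sum, map_smul, ContinuousLinearMap.sum_apply, ContinuousLinearMap.smul_apply,
        ContinuousLinearMap.proj_apply, smul_eq_mul]
      refine Finset.sum_congr rfl fun i _ => ?_
      rw [mul_comm]
    rw [this]
    exact Finset.stronglyMeasurable_fun_sum _ fun i _ => (happ _).smul_const _
  refine (intervalIntegral.hasFDerivAt_integral_of_dominated_of_fderiv_le (𝕜 := ℂ)
    (F := K) (F' := fun x θ => fderiv ℂ (fun x => K x θ) x) (bound := fun _ => (2 * M) / (R/4))
    (s := ball a (R/4)) (μ := volume)
    (ball_mem_nhds a (by linarith)) ?_ ?_ ?_ ?_ ?_ ?_).differentiableAt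
  · filter_upwards [ball_mem_nhds a hR] with x hx
    exact (hcθ x hx).aestronglyMeasurable
  · exact (hcθ a haR).intervalIntegrable _ _
  · exact hmeas.aestronglyMeasurable
  · refine Eventually.of_forall fun θ hθ x hx => ?_
    have hsub : ball x (R/4) ⊆ closedBall a (R/2) := by
      intro y hy
      rw [mem_ball] at hx hy
      rw [mem_closedBall]
      linarith [dist_triangle y x a]
    have hb : ∀ y ∈ ball x (R/4), ‖K y θ‖ ≤ M := fun y hy =>
      hM (y, θ) ⟨hsub hy, uIoc_subset_uIcc hθ⟩
    refine Complex.norm_fderiv_le_div_of_mapsTo_ball ?_ ?_ (by linarith)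
    · exact (hd θ).mono (hsub.trans (closedBall_subset_ball (by linarith)))
    · intro y hy
      rw [mem_closedBall, dist_eq_norm]
      have h1 := hb y hy
      have h2 := hb x (mem_ball_self (by linarith))
      linarith [norm_sub_le (K y θ) (K x θ)]
  · exact intervalIntegrable_const
  · refine Eventually.of_forall fun θ _ x hx => hda θ x (ball_subset_ball (by linarith) hx)

open Filter Topology Metric Set MeasureTheory in
/-- A holomorphic function vanishing on a hyperplane is divisible by its equation. -/
lemma exists_div_linear {n : ℕ} {U : Set (Fin n → ℂ)} (hU : IsOpen U)
    (L : (Fin n → ℂ) →L[ℂ] ℂ) (v : Fin n → ℂ) (hv : L v = 1)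
    (f : (Fin n → ℂ) → ℂ) (hf : DifferentiableOn ℂ f U)
    (h0 : ∀ x ∈ U, L x = 0 → f x = 0) :
    ∃ g : (Fin n → ℂ) → ℂ, DifferentiableOn ℂ g U ∧ ∀ x ∈ U, f x = g x * L x := by
  classical
  refine ⟨fun x => if L x = 0 then deriv (fun t : ℂ => f (x + t • v)) 0 else f x / L x, ?_, ?_⟩
  swap
  · intro x hx
    by_cases h : L x = 0
    · simp [h, h0 x hx h]
    · simp [h]
  intro a ha
  refine DifferentiableAt.differentiableWithinAt ?_
  by_cases hLa : L a = 0
  swap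
  · have h1 : DifferentiableAt ℂ (fun x => f x / L x) a := by
      simp only [div_eq_mul_inv]
      exact (hf.differentiableAt (hU.mem_nhds ha)).mul (L.differentiableAt.inv hLa)
    refine h1.congr_of_eventuallyEq ?_
    filter_upwards [L.continuous.continuousAt.eventually_ne hLa] with x hx
    simp [hx]
  -- the central case
  have hcont : Continuous fun p : (Fin n → ℂ) × ℂ => p.1 - L p.1 • v + p.2 • v := by fun_prop
  obtain ⟨ε, hε, hεU⟩ : ∃ ε > 0, ∀ x ∈ ball a ε, ∀ t ∈ ball (0:ℂ) ε, x - L x • v + t • v ∈ U := by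
    have : ∀ᶠ p in 𝓝 ((a, 0) : (Fin n → ℂ) × ℂ), p.1 - L p.1 • v + p.2 • v ∈ U := by
      refine hcont.continuousAt.eventually (hU.mem_nhds ?_)
      simpa [hLa] using ha
    obtain ⟨ε, hε, h⟩ := Metric.eventually_nhds_iff_ball.1 this
    refine ⟨ε, hε, fun x hx t ht => h (x, t) ?_⟩
    rw [← ball_prod_same]
    exact ⟨hx, ht⟩
  set r := ε / 2 with hr
  have hr0 : 0 < r := by positivity
  obtain ⟨δ, hδ, hδL⟩ : ∃ δ > 0, ∀ x ∈ ball a δ, x ∈ ball a ε ∧ ‖L x‖ < r := by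
    have h1 : ∀ᶠ x in 𝓝 a, ‖L x‖ < r := by
      have : ContinuousAt (fun x => ‖L x‖) a := by fun_prop
      exact this.eventually_lt continuousAt_const (by simpa [hLa] using hr0)
    exact Metric.eventually_nhds_iff_ball.1 ((eventually_mem_set.2 (ball_mem_nhds a hε)).and h1)
  have hball : closedBall (0:ℂ) r ⊆ ball 0 ε := closedBall_subset_ball (by linarith)
  have hcm : ∀ θ, circleMap 0 r θ ∈ ball (0:ℂ) ε := fun θ =>
    hball (circleMap_mem_closedBall 0 hr0.le θ)
  have hcm0 : ∀ θ, circleMap 0 r θ ≠ 0 := fun θ => circleMap_ne_center hr0.ne'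
  have hcmL : ∀ x ∈ ball a δ, ∀ θ, circleMap 0 r θ - L x ≠ 0 := by
    intro x hx θ h
    have h2 := (hδL x hx).2
    rw [← sub_eq_zero.1 h] at h2
    simp [abs_of_pos hr0] at h2
  let K : (Fin n → ℂ) → ℝ → ℂ := fun x θ => deriv (circleMap 0 r) θ *
    ((circleMap 0 r θ - L x)⁻¹ * ((circleMap 0 r θ)⁻¹ * f (x - L x • v + circleMap 0 r θ • v)))
  have hKd : DifferentiableAt ℂ (fun x => ∫ θ in (0:ℝ)..(2 * Real.pi), K x θ) a := by
    refine differentiableAt_integral_param a hδ K ?_ ?_ _ _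
    · have c1 : Continuous fun p : (Fin n → ℂ) × ℝ => circleMap 0 r p.2 :=
        (continuous_circleMap 0 r).comp continuous_snd
      have c2 : Continuous fun p : (Fin n → ℂ) × ℝ => L p.1 := by fun_prop
      have c3 : ContinuousOn (fun p : (Fin n → ℂ) × ℝ =>
          f (p.1 - L p.1 • v + circleMap 0 r p.2 • v)) (ball a δ ×ˢ univ) := by
        refine hf.continuousOn.comp (g := f) (f := fun p : (Fin n → ℂ) × ℝ =>
          p.1 - L p.1 • v + circleMap 0 r p.2 • v) (Continuous.continuousOn (by fun_prop)) ?_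
        rintro ⟨x, θ⟩ ⟨hx, _⟩
        exact hεU x (hδL x hx).1 _ (hcm θ)
      simp only [K, deriv_circleMap]
      refine ContinuousOn.mul (Continuous.continuousOn (by fun_prop)) ?_
      refine ContinuousOn.mul (ContinuousOn.inv₀ (c1.sub c2).continuousOn ?_) ?_
      · rintro ⟨x, θ⟩ ⟨hx, _⟩
        exact hcmL x hx θ
      · exact ContinuousOn.mul (c1.continuousOn.inv₀ fun p _ => hcm0 p.2) c3
    · intro θ
      have d3 : DifferentiableOn ℂ (fun x : Fin n → ℂ => f (x - L x • v + circleMap 0 r θ • v))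
          (ball a δ) := by
        refine hf.comp (g := f) (f := fun x : Fin n → ℂ => x - L x • v + circleMap 0 r θ • v)
          (Differentiable.differentiableOn (by fun_prop)) ?_
        intro x hx
        exact hεU x (hδL x hx).1 _ (hcm θ)
      have d2 : DifferentiableOn ℂ (fun x : Fin n → ℂ => (circleMap 0 r θ - L x)⁻¹)
          (ball a δ) :=
        DifferentiableOn.inv (Differentiable.differentiableOn (by fun_prop))
          fun x hx => hcmL x hx θ
      exact (d2.mul (d3.const_mul _)).const_mul _
  refine (hKd.const_mul ((2 * Real.pi * Complex.I : ℂ)⁻¹)).congr_of_eventuallyEq ?_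
  filter_upwards [ball_mem_nhds a hδ] with x hx
  set φ : ℂ → ℂ := fun t => f (x - L x • v + t • v) with hφ
  have hφd : DifferentiableOn ℂ φ (ball 0 ε) := by
    refine hf.comp (g := f) (f := fun t : ℂ => x - L x • v + t • v)
      (Differentiable.differentiableOn (by fun_prop)) ?_
    intro t ht
    exact hεU x (hδL x hx).1 t ht
  have hφ0 : φ 0 = 0 := by
    refine h0 _ (hεU x (hδL x hx).1 0 (mem_ball_self hε)) ?_
    simp [hv]
  have hψd : DifferentiableOn ℂ (dslope φ 0) (ball 0 ε) :=
    (Complex.differentiableOn_dslope (ball_mem_nhds 0 hε)).2 hφd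
  have hLx : L x ∈ ball (0:ℂ) r := by simpa using (hδL x hx).2
  have hcauchy := (hψd.mono hball).circleIntegral_sub_inv_smul hLx
  have hval : (if L x = 0 then deriv (fun t : ℂ => f (x + t • v)) 0 else f x / L x)
      = dslope φ 0 (L x) := by
    split_ifs with h
    · rw [h, dslope_same, hφ]; simp [h]
    · rw [dslope_of_ne _ h, slope_def_field, hφ0]; simp [hφ]
  have hint : (∫ θ in (0:ℝ)..(2 * Real.pi), K x θ) = 2 * Real.pi * Complex.I * dslope φ 0 (L x) := by
    rw [← smul_eq_mul (2 * Real.pi * Complex.I : ℂ), ← hcauchy, circleIntegral]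
    refine intervalIntegral.integral_congr fun θ _ => ?_
    simp only [K, smul_eq_mul]
    rw [dslope_of_ne _ (hcm0 θ), slope_def_field, hφ0]
    simp only [hφ, sub_zero]
    rw [div_eq_inv_mul]
  rw [hval, hint, inv_mul_cancel_left₀ Complex.two_pi_I_ne_zero]

open Filter Topology in
lemma eventually_prod_ne {n : ℕ} (S : Finset (Fin n × Fin n)) (a w : Fin n → ℂ)
    (hw : ∀ q ∈ S, w q.2 ≠ w q.1) :
    ∀ᶠ s in 𝓝[≠] (0:ℂ), ∏ q ∈ S, ((a + s • w) q.2 - (a + s • w) q.1) ≠ 0 := by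
  simp only [Finset.prod_ne_zero_iff]
  rw [Filter.eventually_all_finset]
  intro q hq
  have he : w q.2 - w q.1 ≠ 0 := sub_ne_zero.2 (hw q hq)
  have : ∀ᶠ s in 𝓝[≠] (0:ℂ), s ≠ - (a q.2 - a q.1) / (w q.2 - w q.1) := by
    by_cases h : (0:ℂ) = - (a q.2 - a q.1) / (w q.2 - w q.1)
    · rw [← h]; exact self_mem_nhdsWithin
    · exact (eventually_ne_nhds h).filter_mono nhdsWithin_le_nhds
  filter_upwards [this] with s hs h
  apply hs
  rw [eq_div_iff he]
  simp only [Pi.add_apply, Pi.smul_apply, smul_eq_mul] at h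
  linear_combination h

open Filter Topology in
lemma eq_zero_of_eventually_line {n : ℕ} {h : (Fin n → ℂ) → ℂ} {a : Fin n → ℂ} (w : Fin n → ℂ)
    (hc : ContinuousAt h a) (h0 : ∀ᶠ s in 𝓝[≠] (0:ℂ), h (a + s • w) = 0) : h a = 0 := by
  have h1 : Tendsto (fun s : ℂ => a + s • w) (𝓝[≠] 0) (𝓝 a) := by
    have : Continuous fun s : ℂ => a + s • w := by fun_prop
    simpa using (this.tendsto 0).mono_left (nhdsWithin_le_nhds (s := {0}ᶜ))
  have h2 : Tendsto (fun s : ℂ => h (a + s • w)) (𝓝[≠] 0) (𝓝 (h a)) := hc.tendsto.comp h1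
  exact tendsto_nhds_unique_of_eventuallyEq h2 tendsto_const_nhds h0

open Filter Topology in
lemma eventually_line_mem {n : ℕ} {U : Set (Fin n → ℂ)} (hU : IsOpen U) {a : Fin n → ℂ}
    (ha : a ∈ U) (w : Fin n → ℂ) : ∀ᶠ s in 𝓝[≠] (0:ℂ), a + s • w ∈ U := by
  have : Continuous fun s : ℂ => a + s • w := by fun_prop
  exact (this.continuousAt.eventually (hU.mem_nhds (by simpa using ha))).filter_mono
    nhdsWithin_le_nhds

lemma exists_quotient_finset {n : ℕ} {U : Set (Fin n → ℂ)} (hU : IsOpen U)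
    (f : (Fin n → ℂ) → ℂ) (hf : DifferentiableOn ℂ f U)
    (hvan : ∀ μ ∈ U, (∃ j k : Fin n, j ≠ k ∧ μ j = μ k) → f μ = 0)
    (S : Finset (Fin n × Fin n)) (hS : ∀ q ∈ S, q.1 < q.2) :
    ∃ g : (Fin n → ℂ) → ℂ, DifferentiableOn ℂ g U ∧
      ∀ μ ∈ U, f μ = g μ * ∏ q ∈ S, (μ q.2 - μ q.1) := by
  classical
  induction S using Finset.induction_on with
  | empty => exact ⟨f, hf, by simp⟩
  | insert p S hp ih =>
    obtain ⟨g, hg, hfg⟩ := ih fun q hq => hS q (Finset.mem_insert_of_mem hq)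
    have hp12 : p.1 < p.2 := hS p (Finset.mem_insert_self _ _)
    obtain ⟨L, hL⟩ : ∃ L : (Fin n → ℂ) →L[ℂ] ℂ, ∀ x, L x = x p.2 - x p.1 :=
      ⟨(ContinuousLinearMap.proj p.2 : (Fin n → ℂ) →L[ℂ] ℂ) - ContinuousLinearMap.proj p.1,
        fun x => rfl⟩
    obtain ⟨g', hg', hgg'⟩ := exists_div_linear hU L
      (Pi.single p.2 1) (by simp [hL, Pi.single_apply, hp12.ne]) g hg (by
        intro a ha hLa
        have hpa : a p.2 = a p.1 := by simpa [hL, sub_eq_zero] using hLa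
        let w : Fin n → ℂ := fun k => if k = p.2 then ((p.1 : ℕ) : ℂ) else ((k : ℕ) : ℂ)
        refine eq_zero_of_eventually_line w (hg.continuousOn.continuousAt (hU.mem_nhds ha)) ?_
        have hw : ∀ q ∈ S, w q.2 ≠ w q.1 := by
          intro q hq
          have h1 : q.1 < q.2 := hS q (Finset.mem_insert_of_mem hq)
          have h2 : q ≠ p := fun h => hp (h ▸ hq)
          have h3 : ¬ (q.1 = p.1 ∧ q.2 = p.2) := fun h => h2 (Prod.ext h.1 h.2)
          simp only [w]
          split_ifs <;> simp only [ne_eq, Nat.cast_inj, Fin.ext_iff, Fin.lt_def] at * <;> omega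
        filter_upwards [eventually_prod_ne S a w hw, eventually_line_mem hU ha w] with s hs hsU
        have h1 := hfg _ hsU
        rw [hvan _ hsU ⟨p.2, p.1, hp12.ne', by simp [w, hpa, hp12.ne]⟩] at h1
        exact (mul_eq_zero.1 h1.symm).resolve_right hs)
    refine ⟨g', hg', fun μ hμ => ?_⟩
    rw [hfg μ hμ, hgg' μ hμ, Finset.prod_insert hp]
    rw [hL, mul_assoc]


/-- If `f` is holomorphic on an open `U ⊆ ℂ^ℓ` and vanishes whenever two coordinates
coincide, then there is a holomorphic `g` on `U`, unique on `U`, with `f = g·Δ`. -/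
theorem exists_unique_holomorphic_quotient (ℓ : ℕ) (U : Set (Fin ℓ → ℂ)) (hU : IsOpen U)
    (f : (Fin ℓ → ℂ) → ℂ) (hf : DifferentiableOn ℂ f U)
    (hvan : ∀ μ ∈ U, (∃ j k : Fin ℓ, j ≠ k ∧ μ j = μ k) → f μ = 0) :
    ∃ g : (Fin ℓ → ℂ) → ℂ,
      (DifferentiableOn ℂ g U ∧ ∀ μ ∈ U, f μ = g μ * vdet μ) ∧
      ∀ g' : (Fin ℓ → ℂ) → ℂ, DifferentiableOn ℂ g' U →
        (∀ μ ∈ U, f μ = g' μ * vdet μ) → Set.EqOn g g' U := by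
  obtain ⟨g, hg, hfg⟩ := exists_quotient_finset hU f hf hvan
    (Finset.univ.filter (fun p : Fin ℓ × Fin ℓ => p.1 < p.2)) (by simp)
  refine ⟨g, ⟨hg, hfg⟩, fun g' hg' hfg' a ha => ?_⟩
  have hc : ContinuousAt (fun x => g x - g' x) a :=
    (hg.continuousOn.continuousAt (hU.mem_nhds ha)).sub
      (hg'.continuousOn.continuousAt (hU.mem_nhds ha))
  refine sub_eq_zero.1 (eq_zero_of_eventually_line (h := fun x => g x - g' x)
    (fun k : Fin ℓ => ((k : ℕ) : ℂ)) hc ?_)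
  filter_upwards [eventually_prod_ne
    (Finset.univ.filter (fun p : Fin ℓ × Fin ℓ => p.1 < p.2)) a
    (fun k : Fin ℓ => ((k : ℕ) : ℂ)) (by
      intro q hq
      have : q.1 < q.2 := by simpa using hq
      simp only [ne_eq, Nat.cast_inj]
      omega), eventually_line_mem hU ha (fun k : Fin ℓ => ((k : ℕ) : ℂ))] with s hs hsU
  have h1 := hfg _ hsU
  rw [hfg' _ hsU] at h1
  exact sub_eq_zero.2 (mul_right_cancel₀ hs h1).symm
end

section
/- Cramér's inequality: for all natural numbers k ≥ 0 and all real x, |H_k(√(2k) x)| ≤ (k!)^{1/2} 2^{k/2} e^{k x²}. -/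
/-- The physicists' Hermite polynomials, `H_0 = 1`, `H_{k+1} = 2x H_k - H_k'`. -/
noncomputable def hermiteH : ℕ → Polynomial ℝ
  | 0 => 1
  | n + 1 => Polynomial.C 2 * Polynomial.X * hermiteH n - Polynomial.derivative (hermiteH n)


open Real MeasureTheory intervalIntegral in
theorem sing_int_bound : ∫ p in (0:ℝ)..(π/2),
    (1.5 * p ^ (-(1/2):ℝ) - 0.8 * p ^ (3/2:ℝ) + 0.22 * p ^ (7/2:ℝ)) ≤ 3.19 := by
  have i1 : IntervalIntegrable (fun p : ℝ => p ^ (-(1/2):ℝ)) volume 0 (π/2) :=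
    intervalIntegral.intervalIntegrable_rpow' (by norm_num)
  have i2 : IntervalIntegrable (fun p : ℝ => p ^ (3/2:ℝ)) volume 0 (π/2) :=
    intervalIntegral.intervalIntegrable_rpow' (by norm_num)
  have i3 : IntervalIntegrable (fun p : ℝ => p ^ (7/2:ℝ)) volume 0 (π/2) :=
    intervalIntegral.intervalIntegrable_rpow' (by norm_num)
  rw [intervalIntegral.integral_add ((i1.const_mul _).sub (i2.const_mul _)) (i3.const_mul _),
    intervalIntegral.integral_sub (i1.const_mul _) (i2.const_mul _)]
  simp only [intervalIntegral.integral_const_mul]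
  rw [integral_rpow (by norm_num), integral_rpow (by norm_num), integral_rpow (by norm_num)]
  have hp : 0 < π / 2 := by positivity
  have e1 : (π/2) ^ (-(1/2:ℝ) + 1) = √(π/2) := by rw [sqrt_eq_rpow]; norm_num
  have e2 : (π/2) ^ (3/2 + 1:ℝ) = √(π/2) * (π/2)^2 := by
    rw [sqrt_eq_rpow, ← rpow_natCast, ← rpow_add hp]; norm_num
  have e3 : (π/2) ^ (7/2 + 1:ℝ) = √(π/2) * (π/2)^4 := by
    rw [sqrt_eq_rpow, ← rpow_natCast, ← rpow_add hp]; norm_num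
  rw [e1, e2, e3, zero_rpow (by norm_num), zero_rpow (by norm_num), zero_rpow (by norm_num)]
  have hs : √(π/2) ≤ 1.2534 := by
    rw [sqrt_le_left (by norm_num)]; have := pi_lt_d4; norm_num at *; linarith
  have h1 : π/2 < 1.5708 := by have := pi_lt_d4; norm_num at *; linarith
  have h2 : 1.5707 < π/2 := by have := pi_gt_d4; norm_num at *; linarith
  have h3 : (π/2)^2 ≤ 1.5708^2 := by gcongr
  have h4 : (1.5707:ℝ)^2 ≤ (π/2)^2 := by gcongr
  have h5 : (π/2)^4 ≤ 1.5708^4 := by gcongr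
  have h6 : 3 - 0.32 * (π/2)^2 + 0.44/9 * (π/2)^4 ≤ 2.52 := by
    norm_num at *; linarith
  have h7 : √(π/2) * (3 - 0.32 * (π/2)^2 + 0.44/9 * (π/2)^4) ≤ √(π/2) * 2.52 := by gcongr
  norm_num at *
  linarith

theorem poly_bound (t : ℝ) (h0 : 0.76 ≤ t) (h1 : t ≤ 1) :
    1.5 - 6*(1-t^2)*t^4 ≤ t*(1.5-4.8*(1-t^2)+7.92*(1-t^2)^2) := by
  obtain ⟨a, rfl⟩ : ∃ a, t = 1 - a := ⟨1 - t, by ring⟩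
  have ha : 0 ≤ a := by linarith
  have hb : 0 ≤ 0.24 - a := by linarith
  nlinarith [mul_nonneg ha hb, mul_nonneg (mul_nonneg ha hb) hb, mul_nonneg (mul_nonneg ha ha) hb,
    mul_nonneg (mul_nonneg ha ha) (mul_nonneg hb hb), mul_nonneg (mul_nonneg ha ha) (mul_nonneg ha hb), pow_nonneg ha 4,
    pow_nonneg ha 5, pow_nonneg ha 6, mul_nonneg (pow_nonneg ha 4) hb, mul_nonneg (pow_nonneg ha 5) hb, mul_nonneg ha (mul_nonneg hb (mul_nonneg hb hb))]

open Real in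
theorem pointwise_bound (p : ℝ) (h0 : 0 < p) (h1 : p ≤ π/2) :
    (1.5 - sin p ^ 2) * (√(sin p))⁻¹ ≤
      1.5 * p ^ (-(1/2):ℝ) - 0.8 * p ^ (3/2:ℝ) + 0.22 * p ^ (7/2:ℝ) := by
  have hpi := pi_lt_d4
  have hp2 : p < 1.5708 := by norm_num at *; linarith
  have hy : p ^ 2 ≤ 1.5708^2 := by gcongr
  set m := 1 - p^2/6 with hm
  have hm0 : 0.5776 ≤ m := by norm_num at *; linarith
  have hm1 : m ≤ 1 := by have := sq_nonneg p; linarith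
  have hmp : 0 < m := by norm_num at *; linarith
  have hs : p * m ≤ sin p := by have := sin_gt_sub_cube h0; rw [hm]; linarith
  have hpm : 0 < p * m := by positivity
  have hsin : 0 < sin p := by linarith
  have e1 : p ^ (-(1/2):ℝ) = (√p)⁻¹ := by rw [sqrt_eq_rpow, rpow_neg h0.le]
  have e2 : p ^ (3/2:ℝ) = (√p)⁻¹ * p^2 := by
    rw [← e1, ← rpow_natCast, ← rpow_add h0]; norm_num
  have e3 : p ^ (7/2:ℝ) = (√p)⁻¹ * p^4 := by
    rw [← e1, ← rpow_natCast, ← rpow_add h0]; norm_num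
  rw [e1, e2, e3]
  have ht0 : 0.76 ≤ √m := by
    apply le_sqrt_of_sq_le; norm_num at *; linarith
  have ht1 : √m ≤ 1 := by simpa using sqrt_le_sqrt hm1
  have htp : 0 < √m := by positivity
  have hsp : 0 < √p := by positivity
  have key := poly_bound (√m) ht0 ht1
  have hsq : √m ^ 2 = m := sq_sqrt hmp.le
  have h4 : √m ^ 4 = m^2 := by
    calc √m ^ 4 = (√m ^ 2)^2 := by ring
      _ = m^2 := by rw [hsq]
  rw [hsq, h4] at key
  have hp6 : 6 * (1 - m) = p^2 := by rw [hm]; ring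
  have hnn : 0 ≤ 1.5 - (p*m)^2 := by
    have : (p*m)^2 ≤ 1.2 := by
      have h9 : (p*m)^2 = p^2 * (1-p^2/6)^2 := by rw [hm]; ring
      rw [h9]
      have : 0 ≤ p^2 := sq_nonneg p
      generalize p^2 = y at *
      norm_num at *
      nlinarith [sq_nonneg (y-2), mul_nonneg this (sub_nonneg.2 hy), sq_nonneg y, mul_nonneg this (sq_nonneg (y-2))]
    norm_num at *; linarith
  calc (1.5 - sin p ^ 2) * (√(sin p))⁻¹ ≤ (1.5 - (p*m)^2) * (√(sin p))⁻¹ := by gcongr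
    _ ≤ (1.5 - (p*m)^2) * (√(p*m))⁻¹ := by gcongr
    _ = (√p)⁻¹ * ((1.5 - 6*(1-m)*m^2) / √m) := by
      rw [sqrt_mul h0.le, hp6]; field_simp
    _ ≤ (√p)⁻¹ * (1.5-4.8*(1-m)+7.92*(1-m)^2) := by
      gcongr
      rw [div_le_iff₀ htp]; linarith
    _ = _ := by
      have : 1 - m = p^2/6 := by rw [hm]; ring
      rw [this]; ring

/-- Values of the Hermite polynomials. -/
noncomputable def hv (n : ℕ) (x : ℝ) : ℝ := (hermiteH n).eval x

theorem hermiteH_deriv (n : ℕ) : Polynomial.derivative (hermiteH (n+1)) =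
    Polynomial.C (2*((n:ℝ)+1)) * hermiteH n := by
  induction n with
  | zero => simp [hermiteH]
  | succ k ih =>
    rw [hermiteH, Polynomial.derivative_sub, ih, Polynomial.derivative_C_mul]
    rw [show hermiteH (k+1) = Polynomial.C 2 * Polynomial.X * hermiteH k - Polynomial.derivative (hermiteH k) from rfl] at ih ⊢
    simp only [Polynomial.derivative_mul, Polynomial.derivative_C, Polynomial.derivative_X, ih]
    push_cast
    simp only [Polynomial.C_mul, Polynomial.C_add, Polynomial.C_1]
    ring

theorem hv_zero (x : ℝ) : hv 0 x = 1 := by simp [hv, hermiteH]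

theorem hv_one (x : ℝ) : hv 1 x = 2 * x := by simp [hv, hermiteH]

theorem hv_hasDerivAt (n : ℕ) (x : ℝ) :
    HasDerivAt (hv (n+1)) (2*((n:ℝ)+1) * hv n x) x := by
  have := (hermiteH (n+1)).hasDerivAt x
  rw [hermiteH_deriv] at this
  have h2 : (2*((n:ℝ)+1) * hv n x) = Polynomial.eval x (Polynomial.C (2*((n:ℝ)+1)) * hermiteH n) := by
    simp [hv]
  rw [h2]
  exact this

theorem hv_rec (n : ℕ) (x : ℝ) :
    hv (n+2) x = 2 * x * hv (n+1) x - 2*((n:ℝ)+1) * hv n x := by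
  have : hermiteH (n+2) = Polynomial.C 2 * Polynomial.X * hermiteH (n+1) -
    Polynomial.derivative (hermiteH (n+1)) := rfl
  rw [hermiteH_deriv] at this
  simp [hv, this]

/-- Normalised squares. -/
noncomputable def hc (n : ℕ) (x : ℝ) : ℝ := hv n x ^ 2 / (2^n * (n.factorial : ℝ))

theorem hc_nonneg (n : ℕ) (x : ℝ) : 0 ≤ hc n x := by
  unfold hc; positivity

theorem hc_rec (k : ℕ) (x : ℝ) :
    ((k:ℝ)+3) * hc (k+3) x + ((k:ℝ)+2-2*x^2) * hc (k+2) x - ((k:ℝ)+2-2*x^2) * hc (k+1) x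
      - ((k:ℝ)+1) * hc k x = 0 := by
  have h3 := hv_rec (k+1) x
  have h2 := hv_rec k x
  unfold hc
  rw [show k+1+2 = k+3 by ring, show k+1+1 = k+2 by ring] at h3
  rw [h3, h2]
  simp only [Nat.factorial_succ]
  push_cast
  have : (k.factorial : ℝ) ≠ 0 := by positivity
  field_simp
  ring

open Filter in
theorem hv_exists_max (n : ℕ) : ∃ y, ∀ z, hv n z ^ 2 * Real.exp (-z^2) ≤ hv n y ^ 2 * Real.exp (-y^2) := by
  have hcont : Continuous (fun z => hv n z ^ 2 * Real.exp (-z^2)) := by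
    unfold hv; fun_prop
  have hlim : Tendsto (fun z => hv n z ^ 2 * Real.exp (-z^2)) (cocompact ℝ) (nhds 0) := by
    have : (fun z => hv n z ^ 2 * Real.exp (-z^2)) = fun z => ((hermiteH n)^2).eval z * Real.exp (-z^2) := by
      ext; simp [hv]
    rw [this]
    simp only [Polynomial.eval_eq_sum_range, Finset.sum_mul]
    rw [← Finset.sum_const_zero (s := Finset.range (((hermiteH n)^2).natDegree + 1))]
    apply tendsto_finsetSum
    intro i _
    have h1 : Tendsto (fun x : ℝ => |x| ^ (i:ℝ) * Real.exp (-1 * x^2)) (cocompact ℝ) (nhds 0) :=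
      tendsto_rpow_abs_mul_exp_neg_mul_sq_cocompact one_pos i
    have h2 : Tendsto (fun x : ℝ => x ^ i * Real.exp (-x^2)) (cocompact ℝ) (nhds 0) := by
      rw [tendsto_zero_iff_abs_tendsto_zero]
      refine h1.congr fun x => ?_
      simp [abs_mul]
    simpa [mul_assoc] using h2.const_mul (((hermiteH n)^2).coeff i)
  by_cases h : ∃ x, 0 < hv n x ^ 2 * Real.exp (-x^2)
  · obtain ⟨x, hx⟩ := h
    exact hcont.exists_forall_ge' x ((hlim.eventually (gt_mem_nhds hx)).mono fun _ h => le_of_lt h)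
  · push Not at h
    exact ⟨0, fun z => (h z).trans (by positivity)⟩

/-- At a critical point with nonzero value. -/
theorem hv_crit (n : ℕ) (y : ℝ) (hy : hv (n+1) y ≠ 0)
    (hmax : ∀ z, hv (n+1) z ^ 2 * Real.exp (-z^2) ≤ hv (n+1) y ^ 2 * Real.exp (-y^2)) :
    2*((n:ℝ)+1) * hv n y = y * hv (n+1) y := by
  have hd : HasDerivAt (fun z => hv (n+1) z ^ 2 * Real.exp (-z^2))
      ((2 * hv (n+1) y * (2*((n:ℝ)+1) * hv n y)) * Real.exp (-y^2)
        + hv (n+1) y ^ 2 * (Real.exp (-y^2) * (-(2*y)))) y := by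
    have h1 := (hv_hasDerivAt n y).pow 2
    have h2 : HasDerivAt (fun z : ℝ => Real.exp (-z^2)) (Real.exp (-y^2) * (-(2*y))) y := by
      have := ((hasDerivAt_pow 2 y).neg).exp
      simpa using this
    refine (h1.mul h2).congr_deriv ?_
    norm_num
  have hloc : IsLocalMax (fun z => hv (n+1) z ^ 2 * Real.exp (-z^2)) y :=
    Filter.Eventually.of_forall hmax
  have := hloc.hasDerivAt_eq_zero hd
  have he := Real.exp_pos (-y^2)
  have h3 : (2 * hv (n+1) y * Real.exp (-y^2)) * (2*((n:ℝ)+1) * hv n y - y * hv (n+1) y) = 0 := by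
    linarith
  rcases mul_eq_zero.1 h3 with h | h
  · exact absurd h (by positivity)
  · linarith

theorem quad_bound (k u : ℝ) (hk : 0 ≤ k) :
    1.45 ≤ 0.25 * ((u-(k+2))^2 / ((k+1)*(k+2))) + 0.7 * (u / (2*(k+2))) + 1
      + 0.7 * (u / (2*(k+3))) + 0.25 * ((u-(k+3))^2 / ((k+3)*(k+4))) := by
  have hN : 0 ≤ 5*(u-(k+2))^2*((k+3)*(k+4)) + 7*u*((k+1)*(k+3)*(k+4)) + 7*u*((k+1)*(k+2)*(k+4))
      + 5*(u-(k+3))^2*((k+1)*(k+2)) - 9*((k+1)*(k+2)*(k+3)*(k+4)) := by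
    have ha : 0 < 4 * (5*(2*k^2+10*k+14)) := by positivity
    refine nonneg_of_mul_nonneg_right ?_ ha
    have hq : 0 ≤ k^2+5*k := by positivity
    have : 0 ≤ 4*(k^2+5*k)^3 + 287*(k^2+5*k)^2 + 2664*(k^2+5*k) + 6320 := by positivity
    have h2 := sq_nonneg (2*(5*(2*k^2+10*k+14))*u + (2*k+5)*(-3*k^2-15*k-32))
    refine (add_nonneg h2 this).trans (le_of_eq ?_)
    ring
  have hD : 0 < 20*((k+1)*(k+2)*(k+3)*(k+4)) := by positivity
  rw [← sub_nonneg]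
  refine (div_nonneg hN hD.le).trans (le_of_eq ?_)
  field_simp
  ring

/-- the values of neighbours at a critical point, `n = k+2`. -/
theorem hc_crit (k : ℕ) (y : ℝ) (h : 2*((k:ℝ)+2) * hv (k+1) y = y * hv (k+2) y) :
    1.45 * hc (k+2) y ≤ 0.25 * hc k y + 0.7 * hc (k+1) y + hc (k+2) y
      + 0.7 * hc (k+3) y + 0.25 * hc (k+4) y := by
  have r2 := hv_rec k y
  have r3 := hv_rec (k+1) y
  have r4 := hv_rec (k+2) y
  rw [show k+1+2 = k+3 by ring, show k+1+1 = k+2 by ring] at r3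
  rw [show k+2+2 = k+4 by ring, show k+2+1 = k+3 by ring] at r4
  push_cast at r3 r4
  have hk : (0:ℝ) ≤ k := by positivity
  have e1 : hv (k+1) y = y * hv (k+2) y / (2*((k:ℝ)+2)) := by field_simp; linarith
  have e3 : hv (k+3) y = y * hv (k+2) y := by rw [r3]; linarith
  have e4 : hv (k+4) y = 2 * (y^2 - (k+3)) * hv (k+2) y := by rw [r4, e3]; ring
  have e0 : hv k y = (y^2 - (k+2)) * hv (k+2) y / (2*((k:ℝ)+1)*((k:ℝ)+2)) := by
    rw [e1] at r2; field_simp at r2 ⊢; linarith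
  have c1 : hc (k+1) y = y^2 / (2*((k:ℝ)+2)) * hc (k+2) y := by
    unfold hc; rw [e1]; simp only [Nat.factorial_succ]; push_cast
    have : (k.factorial : ℝ) ≠ 0 := by positivity
    field_simp; ring
  have c3 : hc (k+3) y = y^2 / (2*((k:ℝ)+3)) * hc (k+2) y := by
    unfold hc; rw [e3]; simp only [Nat.factorial_succ]; push_cast
    have : (k.factorial : ℝ) ≠ 0 := by positivity
    field_simp; ring
  have c4 : hc (k+4) y = (y^2-(k+3))^2 / (((k:ℝ)+3)*((k:ℝ)+4)) * hc (k+2) y := by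
    unfold hc; rw [e4]; simp only [Nat.factorial_succ]; push_cast
    have : (k.factorial : ℝ) ≠ 0 := by positivity
    field_simp; ring
  have c0 : hc k y = (y^2-(k+2))^2 / (((k:ℝ)+1)*((k:ℝ)+2)) * hc (k+2) y := by
    unfold hc; rw [e0]; simp only [Nat.factorial_succ]; push_cast
    have : (k.factorial : ℝ) ≠ 0 := by positivity
    field_simp; ring
  rw [c0, c1, c3, c4]
  have hpos : 0 ≤ hc (k+2) y := hc_nonneg _ _
  have hu : 0 ≤ y^2 := sq_nonneg y
  generalize y^2 = u
  have key := quad_bound k u hk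
  refine (mul_le_mul_of_nonneg_right key hpos).trans (le_of_eq ?_)
  ring

/-- Mehler kernel on the diagonal. -/
noncomputable def mf (x : ℝ) (r : ℂ) : ℂ :=
  Complex.exp (-(1/2) * Complex.log (1 - r^2) - (x:ℂ)^2 * ((1-r)/(1+r)))

theorem disk_facts (r : ℂ) (hr : ‖r‖ < 1) :
    (1 - r^2) ∈ Complex.slitPlane ∧ 1 + r ≠ 0 ∧ 1 - r^2 ≠ 0 ∧ 1 - r ≠ 0 := by
  have h1 : 1 + r ≠ 0 := by
    intro h
    have : r = -1 := by linear_combination h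
    rw [this] at hr; simp at hr
  have h3 : 1 - r ≠ 0 := by
    intro h
    have : r = 1 := by linear_combination -h
    rw [this] at hr; simp at hr
  have h2 : (1 - r^2) ∈ Complex.slitPlane := by
    left
    have h := Complex.re_le_norm (r^2)
    have h4 : ‖r^2‖ < 1 := by rw [norm_pow]; exact pow_lt_one₀ (norm_nonneg _) hr (by norm_num)
    simp only [Complex.sub_re, Complex.one_re]; linarith
  exact ⟨h2, h1, Complex.slitPlane_ne_zero h2, h3⟩

theorem mf_hasDerivAt (x : ℝ) (r : ℂ) (hr : ‖r‖ < 1) :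
    HasDerivAt (mf x) (mf x r * (r / (1-r^2) + 2*(x:ℂ)^2/(1+r)^2)) r := by
  obtain ⟨h1, h2, h3, -⟩ := disk_facts r hr
  have a1 : HasDerivAt (fun r : ℂ => 1 - r^2) (-(2*r)) r := by
    simpa using (hasDerivAt_pow 2 r).const_sub 1
  have a2 := (a1.clog h1).const_mul (-(1/2):ℂ)
  have a3 : HasDerivAt (fun r : ℂ => (1-r)/(1+r)) (((-1)*(1+r) - (1-r)*1)/(1+r)^2) r :=
    ((hasDerivAt_id r).const_sub 1).div ((hasDerivAt_id r).const_add 1) h2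
  have a4 := (a2.sub (a3.const_mul ((x:ℂ)^2))).cexp
  refine a4.congr_deriv ?_
  simp only [mf, Pi.sub_apply]
  congr 1
  field_simp
  ring

theorem mf_ode (x : ℝ) (r : ℂ) (hr : ‖r‖ < 1) :
    (r / (1-r^2) + 2*(x:ℂ)^2/(1+r)^2) * (1 + r - r^2 - r^3) =
      2*(x:ℂ)^2 + (1-2*(x:ℂ)^2)*r + r^2 := by
  obtain ⟨h1, h2, h3, h4⟩ := disk_facts r hr
  have e1 : (1 - r^2) = (1-r)*(1+r) := by ring
  have e2 : 1 + r - r^2 - r^3 = (1-r)*(1+r)^2 := by ring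
  rw [e1, e2]
  field_simp
  ring

open Real MeasureTheory

/-- Coefficient integrals. -/
noncomputable def mM (x ρ : ℝ) (j : ℤ) : ℂ :=
  ∫ θ in (0:ℝ)..(2*π), mf x (circleMap 0 ρ θ) * (circleMap 0 ρ θ) ^ (-j)

theorem norm_cm (ρ θ : ℝ) (h0 : 0 < ρ) : ‖circleMap 0 ρ θ‖ = ρ := by
  simp [abs_of_pos h0]

theorem cm_ne (ρ θ : ℝ) (h0 : 0 < ρ) : circleMap 0 ρ θ ≠ 0 := by
  rw [← norm_pos_iff, norm_cm ρ θ h0]; exact h0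

theorem mf_cont (x ρ : ℝ) (h0 : 0 < ρ) (h1 : ρ < 1) :
    Continuous fun θ : ℝ => mf x (circleMap 0 ρ θ) := by
  rw [continuous_iff_continuousAt]
  intro θ
  have h := (mf_hasDerivAt x (circleMap 0 ρ θ) (by rw [norm_cm ρ θ h0]; exact h1)).continuousAt
  exact ContinuousAt.comp (f := circleMap 0 ρ) h (continuous_circleMap 0 ρ).continuousAt

theorem cm_cont (ρ : ℝ) (h0 : 0 < ρ) (j : ℤ) :
    Continuous fun θ : ℝ => (circleMap 0 ρ θ) ^ j :=
  (continuous_circleMap 0 ρ).zpow₀ j fun θ => Or.inl (cm_ne ρ θ h0)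

theorem mM_integrable (x ρ : ℝ) (h0 : 0 < ρ) (h1 : ρ < 1) (j : ℤ) :
    IntervalIntegrable (fun θ : ℝ => mf x (circleMap 0 ρ θ) * (circleMap 0 ρ θ) ^ (-j))
      volume 0 (2*π) :=
  ((mf_cont x ρ h0 h1).mul (cm_cont ρ h0 (-j))).intervalIntegrable _ _

theorem mM_rec (x ρ : ℝ) (h0 : 0 < ρ) (h1 : ρ < 1) (n : ℤ) :
    ((n:ℂ)+1) * mM x ρ (n+1) + ((n:ℂ) - 2*(x:ℂ)^2) * mM x ρ n
      - ((n:ℂ) - 2*(x:ℂ)^2) * mM x ρ (n-1) - ((n:ℂ)-1) * mM x ρ (n-2) = 0 := by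
  set F : ℝ → ℂ := fun θ => mf x (circleMap 0 ρ θ) * ((1 + circleMap 0 ρ θ - circleMap 0 ρ θ^2
    - circleMap 0 ρ θ^3) * (circleMap 0 ρ θ) ^ (-n-1)) with hF
  set G : ℝ → ℂ := fun θ => -Complex.I * (
    ((n:ℂ)+1) * (mf x (circleMap 0 ρ θ) * (circleMap 0 ρ θ) ^ (-(n+1)))
    + ((n:ℂ) - 2*(x:ℂ)^2) * (mf x (circleMap 0 ρ θ) * (circleMap 0 ρ θ) ^ (-n))
    - ((n:ℂ) - 2*(x:ℂ)^2) * (mf x (circleMap 0 ρ θ) * (circleMap 0 ρ θ) ^ (-(n-1)))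
    - ((n:ℂ)-1) * (mf x (circleMap 0 ρ θ) * (circleMap 0 ρ θ) ^ (-(n-2)))) with hG
  have hder : ∀ θ : ℝ, HasDerivAt F (G θ) θ := by
    intro θ
    have hn : ‖circleMap 0 ρ θ‖ < 1 := by rw [norm_cm ρ θ h0]; exact h1
    have hne := cm_ne ρ θ h0
    have hode := mf_ode x _ hn
    have d1 := mf_hasDerivAt x _ hn
    have d2 : HasDerivAt (fun r : ℂ => 1 + r - r^2 - r^3)
        (1 - 2 * circleMap 0 ρ θ - 3 * circleMap 0 ρ θ ^2) (circleMap 0 ρ θ) := by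
      have := (((hasDerivAt_id (circleMap 0 ρ θ)).const_add 1).sub
        (hasDerivAt_pow 2 (circleMap 0 ρ θ))).sub (hasDerivAt_pow 3 (circleMap 0 ρ θ))
      refine this.congr_deriv ?_
      norm_num
    have d3 := hasDerivAt_zpow (-n-1) (circleMap 0 ρ θ) (Or.inl hne)
    have d4 := d1.mul (d2.mul d3)
    have d5 := HasDerivAt.comp (h := circleMap 0 ρ) θ d4 (hasDerivAt_circleMap 0 ρ θ)
    refine d5.congr_deriv ?_
    simp only [hG, Pi.mul_apply]
    generalize circleMap 0 ρ θ = r at *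
    generalize (r / (1-r^2) + 2*(x:ℂ)^2/(1+r)^2) = q at *
    have z1 : r ^ (-(n+1)) = r ^ (-n-1) := by congr 1; ring
    have z2 : r ^ (-n) = r ^ (-n-1) * r := by
      rw [← zpow_add_one₀ hne]; congr 1; ring
    have z3 : r ^ (-(n-1)) = r ^ (-n-1) * r * r := by
      rw [← zpow_add_one₀ hne, ← zpow_add_one₀ hne]; congr 1; ring
    have z4 : r ^ (-(n-2)) = r ^ (-n-1) * r * r * r := by
      rw [← zpow_add_one₀ hne, ← zpow_add_one₀ hne, ← zpow_add_one₀ hne]; congr 1; ring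
    have z5 : r ^ (-n-1) = r ^ (-n-1-1) * r := by
      rw [← zpow_add_one₀ hne]; congr 1; ring
    rw [z1, z2, z3, z4, z5]
    generalize r ^ (-n-1-1) = w
    push_cast
    linear_combination (mf x r * w * r * r * Complex.I) * hode
  have hint : ∫ θ in (0:ℝ)..(2*π), G θ = 0 := by
    rw [intervalIntegral.integral_eq_sub_of_hasDerivAt (fun θ _ => hder θ)]
    · have : circleMap 0 ρ (2*π) = circleMap 0 ρ 0 := by simp [circleMap]
      simp only [hF, this, sub_self]
    · apply Continuous.intervalIntegrable
      have := mf_cont x ρ h0 h1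
      have := cm_cont ρ h0
      simp only [hG]
      fun_prop
  have I := mM_integrable x ρ h0 h1
  rw [hG, intervalIntegral.integral_const_mul,
    intervalIntegral.integral_sub ((((I _).const_mul _).add ((I _).const_mul _)).sub ((I _).const_mul _)) ((I _).const_mul _),
    intervalIntegral.integral_sub (((I _).const_mul _).add ((I _).const_mul _)) ((I _).const_mul _),
    intervalIntegral.integral_add ((I _).const_mul _) ((I _).const_mul _)] at hint
  simp only [intervalIntegral.integral_const_mul] at hint
  rcases mul_eq_zero.1 hint with h | h
  · simp at h
  · exact h

theorem mM_nonpos (x ρ : ℝ) (h0 : 0 < ρ) (h1 : ρ < 1) (j : ℕ) :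
    mM x ρ (-j) = 2 * π * (mf x 0 * 0 ^ j) := by
  have hd : DifferentiableOn ℂ (fun r => mf x r * r^j) (Metric.closedBall 0 |ρ|) := by
    intro r hr
    have : ‖r‖ < 1 := by
      rw [mem_closedBall_zero_iff, abs_of_pos h0] at hr; linarith
    exact ((mf_hasDerivAt x r this).differentiableAt.mul (by fun_prop)).differentiableWithinAt
  have := (hd.diffContOnCl_ball (le_refl _)).circleAverage
  rw [Real.circleAverage_def] at this
  rw [← this, mM]
  simp only [neg_neg, zpow_natCast, Complex.real_smul]
  push_cast
  have : (π:ℂ) ≠ 0 := by exact_mod_cast pi_ne_zero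
  field_simp

theorem mM_eq (x ρ : ℝ) (h0 : 0 < ρ) (h1 : ρ < 1) (n : ℕ) :
    mM x ρ n = 2 * π * (Real.exp (-x^2) * hc n x : ℝ) := by
  have hz : mf x 0 = (Real.exp (-x^2) : ℝ) := by simp [mf]
  have i0 := mM_nonpos x ρ h0 h1 0
  have i1 := mM_nonpos x ρ h0 h1 1
  have i2 := mM_nonpos x ρ h0 h1 2
  simp [hz] at i0 i1 i2
  have r0 := mM_rec x ρ h0 h1 0
  have r1 := mM_rec x ρ h0 h1 1
  norm_num at r0 r1
  have b0 : mM x ρ (0:ℕ) = 2 * π * (Real.exp (-x^2) * hc 0 x : ℝ) := by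
    simp [hc, hv_zero, i0]
  have b1 : mM x ρ (1:ℕ) = 2 * π * (Real.exp (-x^2) * hc 1 x : ℝ) := by
    simp only [hc, hv_one]
    push_cast
    simp
    rw [i0, i1, i2] at r0
    linear_combination r0
  have b2 : mM x ρ (2:ℕ) = 2 * π * (Real.exp (-x^2) * hc 2 x : ℝ) := by
    simp only [hc, hv_rec 0, hv_one, hv_zero, zero_add] at b1 ⊢
    push_cast at b1 ⊢
    simp [Nat.factorial] at b1 ⊢
    rw [i0, b1] at r1
    linear_combination r1 / 2
  have key : ∀ n : ℕ, mM x ρ n = 2 * π * (Real.exp (-x^2) * hc n x : ℝ) ∧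
     mM x ρ (n+1:ℕ) = 2 * π * (Real.exp (-x^2) * hc (n+1) x : ℝ) ∧
     mM x ρ (n+2:ℕ) = 2 * π * (Real.exp (-x^2) * hc (n+2) x : ℝ) := by
    intro n
    induction n with
    | zero => exact ⟨b0, b1, b2⟩
    | succ k ih =>
      obtain ⟨j0, j1, j2⟩ := ih
      refine ⟨j1, j2, ?_⟩
      have r := mM_rec x ρ h0 h1 (k+2:ℕ)
      rw [show ((k+2:ℕ):ℤ) + 1 = (k+3:ℕ) by push_cast; ring,
        show ((k+2:ℕ):ℤ) - 1 = (k+1:ℕ) by push_cast; ring,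
        show ((k+2:ℕ):ℤ) - 2 = (k:ℕ) by push_cast; ring, j0, j1, j2] at r
      have c := congrArg (fun t : ℝ => (t:ℂ)) (hc_rec k x)
      push_cast at c r ⊢
      have hk : (k:ℂ) + 3 ≠ 0 := by exact_mod_cast (by positivity : (k:ℝ)+3 ≠ 0)
      apply mul_left_cancel₀ hk
      rw [show (k:ℤ)+1+2 = k+3 by ring, show k+1+2 = k+3 by ring]
      linear_combination r - 2 * π * Complex.exp (-x^2) * c
  exact (key n).1

/-- Bound for the modulus of the kernel. -/
noncomputable def vV (ρ s : ℝ) : ℝ := (√(√((1-ρ^2)^2 + 4*ρ^2*s)))⁻¹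

theorem norm_one_sub (ρ θ : ℝ) :
    ‖1 - (circleMap 0 ρ θ)^2‖ = √((1-ρ^2)^2 + 4*ρ^2*(sin θ)^2) := by
  rw [← sqrt_sq (norm_nonneg (1 - (circleMap 0 ρ θ)^2)), ← Complex.normSq_eq_norm_sq]
  congr 1
  have h := sin_sq_add_cos_sq θ
  have : circleMap 0 ρ θ = ⟨ρ * cos θ, ρ * sin θ⟩ := by
    apply Complex.ext <;>
    simp [circleMap, Complex.exp_ofReal_mul_I_re, Complex.exp_ofReal_mul_I_im]
  rw [this, Complex.normSq_apply]
  simp [pow_two]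
  have hc2 : cos θ * cos θ = 1 - sin θ * sin θ := by linarith
  have e : (ρ * cos θ * (ρ * sin θ) + ρ * sin θ * (ρ * cos θ)) * (ρ * cos θ * (ρ * sin θ) + ρ * sin θ * (ρ * cos θ))
    = 4 * ρ^4 * (cos θ * cos θ) * (sin θ * sin θ) := by ring
  have e2 : ρ * cos θ * (ρ * cos θ) = ρ^2 * (cos θ * cos θ) := by ring
  have e3 := e
  simp only [e2, hc2] at *
  nlinarith [e3]

theorem norm_mf_le (x ρ θ : ℝ) (h0 : 0 < ρ) (h1 : ρ < 1) :
    ‖mf x (circleMap 0 ρ θ)‖ ≤ vV ρ (sin θ ^ 2) := by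
  have hn : ‖circleMap 0 ρ θ‖ < 1 := by rw [norm_cm ρ θ h0]; exact h1
  unfold vV
  rw [← norm_one_sub]
  generalize circleMap 0 ρ θ = r at *
  obtain ⟨g1, g2, g3, -⟩ := disk_facts r hn
  have hre : 0 ≤ ((1-r)/(1+r)).re := by
    rw [Complex.div_re, ← add_div]
    apply div_nonneg _ (Complex.normSq_nonneg _)
    have : ‖r‖^2 < 1 := pow_lt_one₀ (norm_nonneg _) hn (by norm_num)
    rw [← Complex.normSq_eq_norm_sq, Complex.normSq_apply] at this
    simp
    nlinarith
  have hpos : 0 < ‖1 - r^2‖ := norm_pos_iff.2 g3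
  have e : (√‖1 - r^2‖)⁻¹ = Real.exp (-(1/2) * Real.log ‖1-r^2‖) := by
    rw [sqrt_eq_rpow, ← rpow_neg hpos.le, rpow_def_of_pos hpos]
    congr 1; ring
  rw [e, mf, Complex.norm_exp]
  apply Real.exp_le_exp.2
  have e1 : (-(1/2) * Complex.log (1 - r^2)).re = -(1/2) * Real.log ‖1-r^2‖ := by
    rw [← Complex.log_re, show (-(1/2):ℂ) = ((-(1/2):ℝ):ℂ) by push_cast; ring, Complex.re_ofReal_mul]
  have e2 : ((x:ℂ)^2 * ((1-r)/(1+r))).re = x^2 * ((1-r)/(1+r)).re := by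
    rw [← Complex.ofReal_pow, Complex.re_ofReal_mul]
  rw [Complex.sub_re, e1, e2]
  have := mul_nonneg (sq_nonneg x) hre
  linarith

theorem vV_cont (ρ : ℝ) (h1 : ρ < 1) (h0 : 0 < ρ) : Continuous fun θ : ℝ => vV ρ (sin θ ^ 2) := by
  unfold vV
  apply Continuous.inv₀ (by fun_prop)
  intro θ
  have : 0 < (1-ρ^2)^2 := by
    have : 0 < 1 - ρ^2 := by nlinarith
    positivity
  have h2 : 0 < (1-ρ^2)^2 + 4*ρ^2*(sin θ)^2 := by positivity
  positivity

theorem vV_le (ρ θ : ℝ) (h0 : 0 < ρ) (hs : 0 < sin θ) :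
    vV ρ (sin θ ^ 2) ≤ (√(2*ρ))⁻¹ * (√(sin θ))⁻¹ := by
  unfold vV
  rw [← mul_inv, ← sqrt_mul (by positivity)]
  have : 0 < 2*ρ*sin θ := by positivity
  gcongr
  apply le_sqrt_of_sq_le
  nlinarith [sq_nonneg (1-ρ^2)]

theorem integral_KV (ρ : ℝ) (h0 : 0 < ρ) (h1 : ρ < 1) :
    ∫ θ in (0:ℝ)..(2*π), vV ρ (sin θ ^ 2) * (0.5 + 1.4 * cos θ + cos θ ^ 2) ≤
      4 * (√(2*ρ))⁻¹ * 3.19 := by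
  have hv := vV_cont ρ h1 h0
  set g : ℝ → ℝ := fun θ => vV ρ (sin θ ^ 2) * (0.5 + 1.4 * cos θ + cos θ ^ 2) with hg
  have hgc : Continuous g := by simp only [hg]; fun_prop
  set g2 : ℝ → ℝ := fun θ => vV ρ (sin θ ^ 2) * (3 - 2 * sin θ ^ 2) with hg2
  have hg2c : Continuous g2 := by simp only [hg2]; fun_prop
  have hi : ∀ a b, IntervalIntegrable g volume a b := fun a b => hgc.intervalIntegrable a b
  have hi2 : ∀ a b, IntervalIntegrable g2 volume a b := fun a b => hg2c.intervalIntegrable a b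
  have s1 : ∫ θ in (0:ℝ)..(2*π), g θ = ∫ θ in (0:ℝ)..π, g2 θ := by
    rw [← intervalIntegral.integral_add_adjacent_intervals (hi 0 π) (hi π (2*π))]
    have : ∫ θ in π..(2*π), g θ = ∫ θ in (0:ℝ)..π, g (θ + π) := by
      rw [intervalIntegral.integral_comp_add_right]; congr 1 <;> ring
    rw [this, ← intervalIntegral.integral_add (hi _ _)
      ((by fun_prop : Continuous fun θ => g (θ + π)).intervalIntegrable _ _)]
    congr 1
    ext θ
    simp only [hg, hg2, sin_add_pi, cos_add_pi, neg_sq]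
    rw [cos_sq']; ring
  have s2 : ∫ θ in (0:ℝ)..π, g2 θ = 2 * ∫ θ in (0:ℝ)..(π/2), g2 θ := by
    rw [← intervalIntegral.integral_add_adjacent_intervals (hi2 0 (π/2)) (hi2 (π/2) π)]
    have : ∫ θ in (π/2)..π, g2 θ = ∫ θ in (0:ℝ)..(π/2), g2 θ := by
      have h := intervalIntegral.integral_comp_sub_left (a := 0) (b := π/2) g2 π
      rw [sub_zero, show π - π/2 = π/2 by ring] at h
      rw [← h]
      congr 1
      ext θ
      simp only [hg2, sin_pi_sub]
    rw [this]; ring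
  have s3 : ∫ θ in (0:ℝ)..(π/2), g2 θ ≤ ∫ θ in (0:ℝ)..(π/2), 2 * (√(2*ρ))⁻¹ *
      (1.5 * θ ^ (-(1/2):ℝ) - 0.8 * θ ^ (3/2:ℝ) + 0.22 * θ ^ (7/2:ℝ)) := by
    apply intervalIntegral.integral_mono_on_of_le_Ioo (by positivity) (hi2 _ _)
    · apply IntervalIntegrable.const_mul
      exact (((intervalIntegral.intervalIntegrable_rpow' (by norm_num)).const_mul _).sub
        ((intervalIntegral.intervalIntegrable_rpow' (by norm_num)).const_mul _)).add
        ((intervalIntegral.intervalIntegrable_rpow' (by norm_num)).const_mul _)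
    · intro θ hθ
      have hs : 0 < sin θ := sin_pos_of_pos_of_lt_pi hθ.1 (by have := hθ.2; have := pi_pos; linarith)
      have hs1 := sin_sq_le_one θ
      have h3 : 0 ≤ 3 - 2 * sin θ ^ 2 := by linarith
      calc g2 θ ≤ ((√(2*ρ))⁻¹ * (√(sin θ))⁻¹) * (3 - 2 * sin θ ^ 2) :=
            mul_le_mul_of_nonneg_right (vV_le ρ θ h0 hs) h3
        _ = 2 * (√(2*ρ))⁻¹ * ((1.5 - sin θ ^ 2) * (√(sin θ))⁻¹) := by ring
        _ ≤ _ := by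
          gcongr
          exact pointwise_bound θ hθ.1 hθ.2.le
  rw [s1, s2]
  rw [intervalIntegral.integral_const_mul] at s3
  have s4 := mul_le_mul_of_nonneg_left sing_int_bound (by positivity : 0 ≤ 2 * (√(2*ρ))⁻¹)
  linarith

theorem sum_bound_rho (x ρ : ℝ) (h0 : 0 < ρ) (h1 : ρ < 1) (k : ℕ) :
    2 * π * Real.exp (-x^2) * (0.25 * ρ^k * hc k x + 0.7 * ρ^(k+1) * hc (k+1) x
      + ρ^(k+2) * hc (k+2) x + 0.7 * ρ^(k+3) * hc (k+3) x + 0.25 * ρ^(k+4) * hc (k+4) x)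
      ≤ 4 * (√(2*ρ))⁻¹ * 3.19 := by
  set T := 2 * π * Real.exp (-x^2) * (0.25 * ρ^k * hc k x + 0.7 * ρ^(k+1) * hc (k+1) x
      + ρ^(k+2) * hc (k+2) x + 0.7 * ρ^(k+3) * hc (k+3) x + 0.25 * ρ^(k+4) * hc (k+4) x) with hT
  have hTc : (T:ℂ) = (0.25 * ρ^k) * mM x ρ (k:ℕ) + (0.7 * ρ^(k+1)) * mM x ρ (k+1:ℕ)
      + (ρ^(k+2)) * mM x ρ (k+2:ℕ) + (0.7 * ρ^(k+3)) * mM x ρ (k+3:ℕ)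
      + (0.25 * ρ^(k+4)) * mM x ρ (k+4:ℕ) := by
    simp only [mM_eq x ρ h0 h1]
    rw [hT]; push_cast; ring
  have I := mM_integrable x ρ h0 h1
  unfold mM at hTc
  simp only [← intervalIntegral.integral_const_mul] at hTc
  rw [← intervalIntegral.integral_add ((I _).const_mul _) ((I _).const_mul _),
    ← intervalIntegral.integral_add (((I _).const_mul _).add ((I _).const_mul _)) ((I _).const_mul _),
    ← intervalIntegral.integral_add ((((I _).const_mul _).add ((I _).const_mul _)).add ((I _).const_mul _)) ((I _).const_mul _),
    ← intervalIntegral.integral_add (((((I _).const_mul _).add ((I _).const_mul _)).add ((I _).const_mul _)).add ((I _).const_mul _)) ((I _).const_mul _)] at hTc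
  have hle : T ≤ ‖(T:ℂ)‖ := by rw [Complex.norm_real]; exact le_norm_self T
  refine hle.trans ?_
  rw [hTc]
  refine le_trans ?_ (integral_KV ρ h0 h1)
  apply intervalIntegral.norm_integral_le_of_norm_le (by positivity)
  · refine Filter.Eventually.of_forall fun θ _ => ?_
    have hb := norm_mf_le x ρ θ h0 h1
    set w : ℂ := ρ * (circleMap 0 ρ θ)⁻¹ with hw
    set wc : ℂ := Complex.exp (θ * Complex.I) with hwc
    have hcm : circleMap 0 ρ θ = ρ * wc := by simp [circleMap, hwc]
    have hρ : (ρ:ℂ) ≠ 0 := by exact_mod_cast h0.ne'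
    have hnec : wc ≠ 0 := Complex.exp_ne_zero _
    have hww : w * wc = 1 := by rw [hw, hcm]; field_simp
    have hwe : w = Complex.exp (-(θ * Complex.I)) := by
      rw [Complex.exp_neg]; exact eq_inv_of_mul_eq_one_left hww
    have hnw : ‖w‖ = 1 := by
      rw [hw, norm_mul, norm_inv, norm_cm ρ θ h0, Complex.norm_real, norm_of_nonneg h0.le]
      field_simp
    have hcos : w + wc = 2 * (cos θ : ℝ) := by
      rw [hwe, hwc, Complex.ofReal_cos, Complex.two_cos, add_comm, neg_mul]
    have hp : ∀ j : ℕ, (ρ:ℂ)^j * (circleMap 0 ρ θ) ^ (-(j:ℤ)) = w^j := by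
      intro j; rw [hw, mul_pow, zpow_neg, zpow_natCast, inv_pow]
    have hK : (0.25 * ρ^k) * (mf x (circleMap 0 ρ θ) * (circleMap 0 ρ θ) ^ (-((k:ℕ):ℤ)))
      + (0.7 * ρ^(k+1)) * (mf x (circleMap 0 ρ θ) * (circleMap 0 ρ θ) ^ (-((k+1:ℕ):ℤ)))
      + (ρ^(k+2)) * (mf x (circleMap 0 ρ θ) * (circleMap 0 ρ θ) ^ (-((k+2:ℕ):ℤ)))
      + (0.7 * ρ^(k+3)) * (mf x (circleMap 0 ρ θ) * (circleMap 0 ρ θ) ^ (-((k+3:ℕ):ℤ)))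
      + (0.25 * ρ^(k+4)) * (mf x (circleMap 0 ρ θ) * (circleMap 0 ρ θ) ^ (-((k+4:ℕ):ℤ)))
      = mf x (circleMap 0 ρ θ) * w^(k+2) * ((0.5 + 1.4 * cos θ + cos θ ^ 2 : ℝ) : ℂ) := by
      have e : ((0.5 + 1.4 * cos θ + cos θ ^ 2 : ℝ) : ℂ)
        = 0.5 + 0.7 * (w + wc) + 0.25 * (w+wc)^2 := by
        rw [hcos]; push_cast; ring
      rw [e]
      have q0 := hp k
      have q1 := hp (k+1)
      have q2 := hp (k+2)
      have q3 := hp (k+3)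
      have q4 := hp (k+4)
      generalize mf x (circleMap 0 ρ θ) = f
      calc _ = f * (0.25 * w^k + 0.7 * w^(k+1) + w^(k+2) + 0.7 * w^(k+3) + 0.25 * w^(k+4)) := by
            rw [← q0, ← q1, ← q2, ← q3, ← q4]; ring
        _ = _ := by
            linear_combination (-(f * w^k) * (0.7 * w + 0.25 * (w * wc + 1) + 0.5 * w^2)) * hww
    rw [hK, norm_mul, norm_mul, norm_pow, hnw, one_pow, mul_one, Complex.norm_real]
    have hKn : 0 ≤ 0.5 + 1.4 * cos θ + cos θ ^ 2 := by nlinarith [sq_nonneg (cos θ + 0.7)]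
    rw [norm_of_nonneg hKn]
    gcongr
  · apply Continuous.intervalIntegrable
    have := vV_cont ρ h1 h0
    fun_prop

theorem sum_bound (x : ℝ) (k : ℕ) :
    Real.exp (-x^2) * (0.25 * hc k x + 0.7 * hc (k+1) x
      + hc (k+2) x + 0.7 * hc (k+3) x + 0.25 * hc (k+4) x) ≤ 1.45 := by
  have hl : 2 * π * Real.exp (-x^2) * (0.25 * 1^k * hc k x + 0.7 * 1^(k+1) * hc (k+1) x
      + 1^(k+2) * hc (k+2) x + 0.7 * 1^(k+3) * hc (k+3) x + 0.25 * 1^(k+4) * hc (k+4) x)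
      ≤ 4 * (√(2*1))⁻¹ * 3.19 := by
    have c1 : ContinuousWithinAt (fun ρ : ℝ => 2 * π * Real.exp (-x^2) * (0.25 * ρ^k * hc k x + 0.7 * ρ^(k+1) * hc (k+1) x
      + ρ^(k+2) * hc (k+2) x + 0.7 * ρ^(k+3) * hc (k+3) x + 0.25 * ρ^(k+4) * hc (k+4) x)) (Set.Iio 1) 1 := by
      apply Continuous.continuousWithinAt
      fun_prop
    have c2 : ContinuousWithinAt (fun ρ : ℝ => 4 * (√(2*ρ))⁻¹ * 3.19) (Set.Iio 1) 1 := by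
      apply ContinuousAt.continuousWithinAt
      have : √(2*1) ≠ 0 := by positivity
      exact (((continuous_sqrt.comp (continuous_const.mul continuous_id)).continuousAt.inv₀ this).const_mul 4).mul continuousAt_const
    refine le_of_tendsto_of_tendsto c1 c2 ?_
    have : Set.Ioo (0:ℝ) 1 ∈ nhdsWithin (1:ℝ) (Set.Iio 1) := Ioo_mem_nhdsLT one_pos
    filter_upwards [this] with ρ hρ
    exact sum_bound_rho x ρ hρ.1 hρ.2 k
  simp only [one_pow, mul_one, one_mul] at hl
  have h2 : (√2)⁻¹ ≤ 0.7072 := by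
    rw [inv_le_comm₀ (by positivity) (by norm_num)]
    apply le_sqrt_of_sq_le; norm_num
  have hpi := pi_gt_d4
  set S := Real.exp (-x^2) * (0.25 * hc k x + 0.7 * hc (k+1) x
      + hc (k+2) x + 0.7 * hc (k+3) x + 0.25 * hc (k+4) x) with hS
  have hl2 : 2 * π * S ≤ 4 * (√2)⁻¹ * 3.19 := by rw [hS]; linarith
  by_contra hcon
  push Not at hcon
  norm_num at *
  nlinarith

theorem hv_bound (n : ℕ) (z : ℝ) : hv n z ^ 2 * Real.exp (-z^2) ≤ 2^n * (n.factorial : ℝ) := by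
  match n with
  | 0 => simp [hv_zero]; positivity
  | 1 =>
    simp only [hv_one]
    rw [Real.exp_neg, ← div_eq_mul_inv, div_le_iff₀ (Real.exp_pos _)]
    have := Real.quadratic_le_exp_of_nonneg (sq_nonneg z)
    simp
    nlinarith [sq_nonneg (z^2 - 1)]
  | k+2 =>
    obtain ⟨y, hy⟩ := hv_exists_max (k+2)
    refine (hy z).trans ?_
    by_cases h : hv (k+2) y = 0
    · rw [h]; simp
    have hcr := hv_crit (k+1) y h hy
    push_cast at hcr
    have h1 := hc_crit k y (by linarith)
    have h2 := sum_bound y k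
    have h3 := mul_le_mul_of_nonneg_left h1 (Real.exp_pos (-y^2)).le
    have h4 : Real.exp (-y^2) * hc (k+2) y ≤ 1 := by
      norm_num at *; linarith
    unfold hc at h4
    rw [← mul_div_assoc, div_le_one (by positivity)] at h4
    linarith

/-- Cramér's inequality: `|H_k(√(2k) x)| ≤ √(k!) 2^{k/2} e^{k x²}`. -/
theorem cramer_inequality (k : ℕ) (x : ℝ) :
    |(hermiteH k).eval (Real.sqrt (2 * k) * x)| ≤
      Real.sqrt (Nat.factorial k) * (2 : ℝ) ^ ((k : ℝ) / 2) * Real.exp (k * x ^ 2) := by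
  have h := hv_bound k (Real.sqrt (2 * k) * x)
  have e : (Real.sqrt (2 * k) * x)^2 = 2 * (k * x^2) := by
    rw [mul_pow, sq_sqrt (by positivity)]; ring
  rw [e, Real.exp_neg, ← div_eq_mul_inv, div_le_iff₀ (Real.exp_pos _)] at h
  apply abs_le_of_sq_le_sq _ (by positivity)
  refine h.trans (le_of_eq ?_)
  have e2 : ((2:ℝ) ^ ((k:ℝ)/2)) ^ 2 = 2 ^ k := by
    rw [← rpow_natCast, ← rpow_mul (by norm_num)]
    push_cast
    rw [div_mul_cancel₀ _ (by norm_num), rpow_natCast]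
  rw [mul_pow, mul_pow, sq_sqrt (by positivity), ← Real.exp_nat_mul, e2]
  push_cast
  ring
end
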